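/- Positive Characteristic Poincaré Lemma: Let K be a field of characteristic p > 0 and R = K[z_1,...,z_n] (or K(z_1,...,z_n)). An r-form ω = Σ_I a_I dz_I ∈ Ω^r_{R/K} with r ≥ 1 is exact (ω = dη for some η ∈ Ω^{r−1}_{R/K}) if and only if ω is p-closed, i.e. dω = 0 and for every ordered multi-index I = (i_1 < ... < i_r) one has ∂_{i_1}^{p−1}···∂_{i_r}^{p−1}(a_I) = 0. -/

import Mathlib

open MvPolynomial

/-- An `r`-form in `n` variables with coefficients in `R`, written in the standard basis of the
`dz_I` indexed by the `r`-element subsets `I` of the set of variables. -/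
abbrev GForm (R : Type) (n r : ℕ) := {s : Finset (Fin n) // s.card = r} → R

/-- The exterior derivative of an `r`-form, relative to a family `D` of partial derivatives:
`(dω)_T = ∑_{j ∈ T} (-1)^{pos of j in T} D_j ω_{T∖{j}}`. -/
noncomputable def gextd {R : Type} [CommRing R] {n r : ℕ} (D : Fin n → R → R)
    (ω : GForm R n r) : GForm R n (r + 1) :=
  fun T => ∑ j ∈ T.1.attach,
    (-1 : R) ^ ((T.1.filter (fun k => k < j.1)).card) *
      D j.1 (ω ⟨T.1.erase j.1, by rw [Finset.card_erase_of_mem j.2, T.2]; rfl⟩)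

/-- The iterated operator `∂_{i_1}^{p-1} ⋯ ∂_{i_r}^{p-1}` for `T = {i_1 < … < i_r}`. -/
def gpdSet {R : Type} {n : ℕ} (D : Fin n → R → R) (p : ℕ) (T : Finset (Fin n)) (f : R) : R :=
  (T.sort (· ≤ ·)).foldr (fun i g => (D i)^[p - 1] g) f

/-- The family of formal partial derivatives on `K[z_1,…,z_n]`. -/
noncomputable def pderivFam (K : Type) [CommRing K] (n : ℕ) :
    Fin n → MvPolynomial (Fin n) K → MvPolynomial (Fin n) K :=
  fun i f => pderiv i f

/-!
The `p`-closed forms are handled one variable at a time. In the Weyl algebra relation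
`∂ z = z ∂ + 1`, repeated integration by parts can be carried out as long as one only divides by
`1, …, p - 1`; it gives an operator `J` with `∂ J = 1 - c z^(p-1) ∂^(p-1)` for a constant `c`.
Contracting with `∂_i` and applying `J` is a chain homotopy, so a closed form is cohomologous to
one whose coefficients `a_I`, `i ∈ I`, have been replaced by `c z_i^(p-1) ∂_i^(p-1) a_I`. After
all variables have been used, what is left of `a_I` is a multiple of
`∂_{i_1}^(p-1) ⋯ ∂_{i_r}^(p-1) a_I`, which vanishes. Conversely `∂_i^p = 0`, because in
characteristic `p` it is a derivation and it kills the coordinates.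
-/

section Sign

variable {ι : Type*} [LinearOrder ι]

/-- The sign `(-1)^{#{k ∈ T : k < j}}` with which the variable `j` enters the exterior derivative
at the index set `T`. -/
def posSign (j : ι) (T : Finset ι) : ℤ :=
  (-1) ^ (T.filter (· < j)).card

theorem posSign_mul_self (j : ι) (T : Finset ι) : posSign j T * posSign j T = 1 := by
  rw [posSign, ← mul_pow, neg_one_mul, neg_neg, one_pow]

theorem posSign_insert_self (j : ι) (T : Finset ι) : posSign j (insert j T) = posSign j T := by
  simp [posSign, Finset.filter_insert]

theorem posSign_erase {i j : ι} {T : Finset ι} (hi : i ∈ T) :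
    posSign j (T.erase i) = (if i < j then -1 else 1) * posSign j T := by
  rw [posSign, posSign, Finset.filter_erase]
  split_ifs with hij
  · have hmem : i ∈ T.filter (· < j) := Finset.mem_filter.2 ⟨hi, hij⟩
    rw [← Finset.card_erase_add_one hmem, pow_succ]
    ring
  · rw [Finset.erase_eq_of_notMem (by simp [hij]), one_mul]

theorem posSign_mul_posSign_erase {i j : ι} {T : Finset ι} (hij : i ≠ j) (hi : i ∈ T)
    (hj : j ∈ T) :
    posSign j T * posSign i (T.erase j) = -(posSign i T * posSign j (T.erase i)) := by
  rw [posSign_erase hi, posSign_erase hj]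
  rcases lt_or_gt_of_ne hij with h | h <;> simp [h, h.not_gt, mul_comm]

theorem posSign_mul_posSign_insert {i j : ι} {T : Finset ι} (hi : i ∉ T) (hj : j ∈ T) :
    posSign j T * posSign i (T.erase j) = -(posSign i T * posSign j (insert i T)) := by
  have hij : i ≠ j := fun h => hi (h ▸ hj)
  have hsign := posSign_mul_posSign_erase hij (Finset.mem_insert_self i T)
    (Finset.mem_insert_of_mem hj)
  rw [Finset.erase_insert_of_ne hij, posSign_insert_self, posSign_insert_self,
    Finset.erase_insert hi] at hsign
  linear_combination (posSign j T * posSign j (insert i T)) * hsign -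
    (posSign j T * posSign i (T.erase j)) * posSign_mul_self j (insert i T) -
    (posSign i T * posSign j (insert i T)) * posSign_mul_self j T

end Sign

section Koszul

variable {ι K M : Type*} [LinearOrder ι] [Semiring K] [AddCommGroup M] [Module K M]

/-- The Koszul differential of a family of operators `D`, that is, the exterior derivative on
forms of mixed degree: a form is the family of its coefficients, indexed by all finite sets. -/
def koszulDiff (D : ι → Module.End K M) : Module.End K (Finset ι → M) :=
  LinearMap.pi fun T => ∑ j ∈ T, posSign j T • (D j ∘ₗ LinearMap.proj (T.erase j))

theorem koszulDiff_apply (D : ι → Module.End K M) (ω : Finset ι → M) (T : Finset ι) :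
    koszulDiff D ω T = ∑ j ∈ T, posSign j T • D j (ω (T.erase j)) := by
  simp [koszulDiff]

theorem koszulDiff_koszulDiff {D : ι → Module.End K M} (hD : ∀ i j, Commute (D i) (D j))
    (ω : Finset ι → M) : koszulDiff D (koszulDiff D ω) = 0 := by
  funext T
  simp only [koszulDiff_apply, map_sum, map_zsmul, Finset.smul_sum, smul_smul, Pi.zero_apply]
  rw [Finset.sum_sigma']
  refine Finset.sum_involution (fun x _ => ⟨x.2, x.1⟩) ?cancel ?ne ?mem fun _ _ => rfl
  all_goals
    rintro ⟨j, i⟩ hx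
    simp only [Finset.mem_sigma, Finset.mem_erase] at hx
    obtain ⟨hj, hij, hi⟩ := hx
  case cancel =>
    have hcomm : D j (D i (ω ((T.erase j).erase i))) = D i (D j (ω ((T.erase i).erase j))) := by
      rw [Finset.erase_right_comm]
      exact LinearMap.congr_fun (hD j i) _
    simp only [hcomm, posSign_mul_posSign_erase hij hi hj, neg_smul, neg_add_cancel]
  case ne =>
    exact fun _ h => hij (congrArg Sigma.fst h)
  case mem =>
    simp only [Finset.mem_sigma, Finset.mem_erase]
    exact ⟨hi, hij.symm, hj⟩

/-- Contraction with the `i`-th coordinate direction followed by the operator `J`. When `J` is an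
integration operator in the direction `i`, this is the chain homotopy of the Poincaré lemma. -/
def contraction (i : ι) (J : Module.End K M) : Module.End K (Finset ι → M) :=
  LinearMap.pi fun T =>
    if i ∈ T then 0 else posSign i T • (J ∘ₗ LinearMap.proj (insert i T))

theorem contraction_apply_of_mem {i : ι} {T : Finset ι} (hi : i ∈ T) (J : Module.End K M)
    (ω : Finset ι → M) : contraction i J ω T = 0 := by
  simp [contraction, hi]

theorem contraction_apply_of_notMem {i : ι} {T : Finset ι} (hi : i ∉ T) (J : Module.End K M)
    (ω : Finset ι → M) : contraction i J ω T = posSign i T • J (ω (insert i T)) := by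
  simp [contraction, hi]

theorem koszulDiff_contraction_of_mem {i : ι} {T : Finset ι} (hi : i ∈ T)
    (D : ι → Module.End K M) (J : Module.End K M) (ω : Finset ι → M) :
    koszulDiff D (contraction i J ω) T = D i (J (ω T)) := by
  rw [koszulDiff_apply, Finset.sum_eq_single_of_mem i hi]
  · have hsign : posSign i (T.erase i) = posSign i T := by simp [posSign_erase hi]
    rw [contraction_apply_of_notMem (Finset.notMem_erase i T), Finset.insert_erase hi, map_zsmul,
      smul_smul, hsign, posSign_mul_self, one_smul]
  · intro j _ hji
    rw [contraction_apply_of_mem (Finset.mem_erase.2 ⟨hji.symm, hi⟩), map_zero, smul_zero]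

theorem koszulDiff_contraction_add_of_notMem {D : ι → Module.End K M} {i : ι}
    {J : Module.End K M} (hJ : ∀ j, j ≠ i → Commute (D j) J) {T : Finset ι} (hi : i ∉ T)
    (ω : Finset ι → M) :
    koszulDiff D (contraction i J ω) T + contraction i J (koszulDiff D ω) T = J (D i (ω T)) := by
  have hterm : ∀ j ∈ T, posSign j T • D j (contraction i J ω (T.erase j)) =
      -(posSign i T • J (posSign j (insert i T) • D j (ω ((insert i T).erase j)))) := by
    intro j hj
    have hji : j ≠ i := fun h => hi (h ▸ hj)
    have hcomm : ∀ x, D j (J x) = J (D j x) := LinearMap.congr_fun (hJ j hji)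
    rw [contraction_apply_of_notMem fun h => hi (Finset.mem_of_mem_erase h), map_zsmul, map_zsmul,
      smul_smul, smul_smul, posSign_mul_posSign_insert hi hj, neg_smul, hcomm,
      Finset.erase_insert_of_ne hji.symm]
  rw [koszulDiff_apply, Finset.sum_congr rfl hterm, contraction_apply_of_notMem hi,
    koszulDiff_apply, Finset.sum_insert hi, posSign_insert_self, Finset.erase_insert hi]
  simp only [map_add, map_zsmul, map_sum, smul_add, Finset.smul_sum, smul_smul, posSign_mul_self,
    one_smul, Finset.sum_neg_distrib]
  abel

end Koszul

section PowProd

variable {ι K M : Type*} [Semiring K] [AddCommGroup M] [Module K M] {D : ι → Module.End K M}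

/-- The operator `∏_{i ∈ T} D_i ^ q` for a commuting family `D`. -/
def powProd (hD : ∀ i j, Commute (D i) (D j)) (q : ℕ) (T : Finset ι) : Module.End K M :=
  T.noncommProd (fun i => D i ^ q) fun i _ j _ _ => (hD i j).pow_pow q q

theorem powProd_empty (hD : ∀ i j, Commute (D i) (D j)) (q : ℕ) : powProd hD q ∅ = 1 :=
  Finset.noncommProd_empty _ _

theorem powProd_erase_mul [DecidableEq ι] (hD : ∀ i j, Commute (D i) (D j)) (q : ℕ)
    {T : Finset ι} {i : ι} (hi : i ∈ T) :
    powProd hD q (T.erase i) * D i ^ q = powProd hD q T :=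
  Finset.noncommProd_erase_mul T hi _ _

theorem commute_powProd (hD : ∀ i j, Commute (D i) (D j)) (q : ℕ) {T : Finset ι}
    {X : Module.End K M} (hX : ∀ i ∈ T, Commute (D i) X) : Commute (powProd hD q T) X :=
  (Finset.noncommProd_commute _ _ _ _ fun i hi => ((hX i hi).pow_left q).symm).symm

theorem powProd_eq_list_prod [LinearOrder ι] (hD : ∀ i j, Commute (D i) (D j)) (q : ℕ)
    (T : Finset ι) : powProd hD q T = ((T.sort (· ≤ ·)).map (D · ^ q)).prod := by
  rw [powProd, ← Finset.noncommProd_toFinset _ _ (fun i _ j _ _ => (hD i j).pow_pow q q)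
    (T.sort_nodup (· ≤ ·))]
  exact Finset.noncommProd_congr (Finset.sort_toFinset _ _).symm (fun _ _ => rfl) _

end PowProd

section KoszulExactness

variable {ι K M : Type*} [LinearOrder ι] [Semiring K] [AddCommGroup M] [Module K M]
  {D : ι → Module.End K M} (hD : ∀ i j, Commute (D i) (D j)) {q : ℕ}

theorem powProd_koszulDiff (hDq : ∀ i, D i ^ (q + 1) = 0) (η : Finset ι → M) (T : Finset ι) :
    powProd hD q T (koszulDiff D η T) = 0 := by
  rw [koszulDiff_apply, map_sum]
  refine Finset.sum_eq_zero fun j hj => ?_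
  have hkill : powProd hD q T * D j = 0 := by
    rw [← powProd_erase_mul hD q hj, mul_assoc, ← pow_succ, hDq, mul_zero]
  rw [map_zsmul, ← Module.End.mul_apply, hkill, LinearMap.zero_apply, smul_zero]

/-- Subtracting the boundary of the contraction by `J` removes the direction `i` from the
obstruction: on the coefficients with `i ∈ T` what is left is `Y D_i ^ q`, whose factor `D_i ^ q`
completes the remaining product, and on the others only `1 - J D_i`, which commutes with it. -/
theorem powProd_sdiff_insert_sub_koszulDiff {i : ι} {J Y : Module.End K M}
    (hDJ : D i * J = 1 - Y * D i ^ q) (hJ : ∀ j, j ≠ i → Commute (D j) J)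
    (hY : ∀ j, j ≠ i → Commute (D j) Y) {ω : Finset ι → M} (hω : koszulDiff D ω = 0)
    {S : Finset ι} (hi : i ∉ S) {T : Finset ι} (hT : powProd hD q (T \ S) (ω T) = 0) :
    powProd hD q (T \ insert i S) ((ω - koszulDiff D (contraction i J ω)) T) = 0 := by
  have hne : ∀ j ∈ T \ insert i S, j ≠ i := fun j hj h =>
    (Finset.mem_sdiff.1 hj).2 (h ▸ Finset.mem_insert_self i S)
  rw [Pi.sub_apply]
  by_cases hiT : i ∈ T
  · have hrest : ω T - koszulDiff D (contraction i J ω) T = (Y * D i ^ q) (ω T) := by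
      rw [koszulDiff_contraction_of_mem hiT, ← Module.End.mul_apply, hDJ]
      simp
    have hcomm : Commute (powProd hD q (T \ insert i S)) Y :=
      commute_powProd hD q fun j hj => hY j (hne j hj)
    rw [hrest, ← Module.End.mul_apply, ← mul_assoc, hcomm.eq, mul_assoc, Finset.sdiff_insert,
      powProd_erase_mul hD q (Finset.mem_sdiff.2 ⟨hiT, hi⟩), Module.End.mul_apply, hT, map_zero]
  · have hrest : ω T - koszulDiff D (contraction i J ω) T = (1 - J * D i) (ω T) := by
      have hhomotopy := koszulDiff_contraction_add_of_notMem hJ hiT ω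
      rw [hω, map_zero, Pi.zero_apply, add_zero] at hhomotopy
      rw [hhomotopy]
      simp
    have hcomm : Commute (powProd hD q (T \ insert i S)) (1 - J * D i) :=
      commute_powProd hD q fun j hj =>
        (Commute.one_right _).sub_right ((hJ j (hne j hj)).mul_right (hD j i))
    rw [hrest, ← Module.End.mul_apply, hcomm.eq, Module.End.mul_apply,
      Finset.sdiff_insert_of_notMem hiT, hT, map_zero]

theorem exists_koszulDiff_eq [Finite ι] {J Y : ι → Module.End K M}
    (hDJ : ∀ i, D i * J i = 1 - Y i * D i ^ q) (hJ : ∀ i j, j ≠ i → Commute (D j) (J i))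
    (hY : ∀ i j, j ≠ i → Commute (D j) (Y i)) {ω : Finset ι → M} (hω : koszulDiff D ω = 0)
    (hωq : ∀ T, powProd hD q T (ω T) = 0) : ∃ η, koszulDiff D η = ω := by
  cases nonempty_fintype ι
  have hreduce : ∀ S : Finset ι, ∃ η, ∀ T, powProd hD q (T \ S) ((ω - koszulDiff D η) T) = 0 := by
    intro S
    induction S using Finset.induction_on with
    | empty => exact ⟨0, by simpa using hωq⟩
    | insert i S hi ih =>
      obtain ⟨η, hη⟩ := ih
      have hclosed : koszulDiff D (ω - koszulDiff D η) = 0 := by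
        rw [map_sub, hω, koszulDiff_koszulDiff hD, sub_zero]
      refine ⟨η + contraction i (J i) (ω - koszulDiff D η), fun T => ?_⟩
      rw [map_add, ← sub_sub]
      exact powProd_sdiff_insert_sub_koszulDiff hD (hDJ i) (hJ i) (hY i) hclosed hi (hη T)
  obtain ⟨η, hη⟩ := hreduce Finset.univ
  have hzero : ω - koszulDiff D η = 0 := by
    ext T
    simpa [Finset.sdiff_eq_empty_iff_subset.2 (Finset.subset_univ T), powProd_empty] using hη T
  exact ⟨η, (sub_eq_zero.1 hzero).symm⟩

end KoszulExactness

section HomogeneousForms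

variable {n r : ℕ}

/-- A homogeneous form seen as a form of mixed degree, with zero coefficients in the other
degrees. -/
def GForm.extend {R : Type} [Zero R] (ω : GForm R n r) (T : Finset (Fin n)) : R :=
  if h : T.card = r then ω ⟨T, h⟩ else 0

theorem GForm.extend_apply {R : Type} [Zero R] (ω : GForm R n r)
    (T : {s : Finset (Fin n) // s.card = r}) : ω.extend T.1 = ω T :=
  dif_pos T.2

theorem GForm.extend_apply_of_card_ne {R : Type} [Zero R] (ω : GForm R n r)
    {T : Finset (Fin n)} (hT : T.card ≠ r) : ω.extend T = 0 :=
  dif_neg hT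

variable {K : Type*} {R : Type} [Semiring K] [CommRing R] [Module K R]

theorem gextd_restrict (D : Fin n → Module.End K R) (η : Finset (Fin n) → R)
    (T : {s : Finset (Fin n) // s.card = r + 1}) :
    gextd (fun i => D i) (fun s : {s : Finset (Fin n) // s.card = r} => η s) T =
      koszulDiff D η T := by
  rw [gextd, koszulDiff_apply, ← Finset.sum_attach T.1]
  simp [posSign, zsmul_eq_mul]

theorem gextd_apply (D : Fin n → Module.End K R) (ω : GForm R n r)
    (T : {s : Finset (Fin n) // s.card = r + 1}) :
    gextd (fun i => D i) ω T = koszulDiff D ω.extend T := by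
  simp only [← gextd_restrict, GForm.extend_apply]

theorem koszulDiff_extend (D : Fin n → Module.End K R) (ω : GForm R n r) :
    koszulDiff D ω.extend = GForm.extend (gextd (fun i => D i) ω) := by
  funext T
  by_cases hT : T.card = r + 1
  · rw [GForm.extend_apply _ ⟨T, hT⟩, gextd_apply]
  · rw [GForm.extend_apply_of_card_ne _ hT, koszulDiff_apply]
    refine Finset.sum_eq_zero fun j hj => ?_
    have hcard : (T.erase j).card ≠ r := fun h => hT (by rw [← Finset.card_erase_add_one hj, h])
    rw [GForm.extend_apply_of_card_ne _ hcard, map_zero, smul_zero]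

theorem gpdSet_eq_powProd {D : Fin n → Module.End K R} (hD : ∀ i j, Commute (D i) (D j)) (p : ℕ)
    (T : Finset (Fin n)) (f : R) :
    gpdSet (fun i => D i) p T f = powProd hD (p - 1) T f := by
  rw [gpdSet, powProd_eq_list_prod]
  induction T.sort (· ≤ ·) with
  | nil => rfl
  | cons i l ih =>
    rw [List.foldr_cons, ih, List.map_cons, List.prod_cons, Module.End.mul_apply,
      Module.End.pow_apply]

theorem exists_gextd_eq_iff_of_commute {D J Y : Fin n → Module.End K R} {p : ℕ} (hp : p ≠ 0)
    (hD : ∀ i j, Commute (D i) (D j)) (hDp : ∀ i, D i ^ p = 0)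
    (hDJ : ∀ i, D i * J i = 1 - Y i * D i ^ (p - 1))
    (hJ : ∀ i j, j ≠ i → Commute (D j) (J i)) (hY : ∀ i j, j ≠ i → Commute (D j) (Y i))
    (ω : GForm R n (r + 1)) :
    (∃ η : GForm R n r, gextd (fun i => D i) η = ω) ↔
      gextd (fun i => D i) ω = 0 ∧
        ∀ T : {s : Finset (Fin n) // s.card = r + 1}, gpdSet (fun i => D i) p T.1 (ω T) = 0 := by
  constructor
  · rintro ⟨η, rfl⟩
    refine ⟨funext fun T => ?_, fun T => ?_⟩
    · rw [gextd_apply, ← koszulDiff_extend, koszulDiff_koszulDiff hD]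
      rfl
    · rw [gpdSet_eq_powProd hD, gextd_apply]
      exact powProd_koszulDiff hD (by rwa [Nat.sub_add_cancel (Nat.pos_of_ne_zero hp)]) _ _
  · rintro ⟨hω, hωp⟩
    have hclosed : koszulDiff D ω.extend = 0 := by
      rw [koszulDiff_extend, hω]
      funext T
      simp [GForm.extend]
    have hpow : ∀ T, powProd hD (p - 1) T (ω.extend T) = 0 := by
      intro T
      by_cases hT : T.card = r + 1
      · rw [ω.extend_apply ⟨T, hT⟩, ← gpdSet_eq_powProd hD]
        exact hωp ⟨T, hT⟩
      · rw [ω.extend_apply_of_card_ne hT, map_zero]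
    obtain ⟨η, hη⟩ := exists_koszulDiff_eq hD hDJ hJ hY hclosed hpow
    exact ⟨fun s => η s, funext fun T => by rw [gextd_restrict, hη, ω.extend_apply]⟩

end HomogeneousForms

section FormalIntegral

open scoped Nat

theorem mul_pow_succ_of_mul_eq_add_one {A : Type*} [Semiring A] {D Z : A} (h : D * Z = Z * D + 1)
    (m : ℕ) : D * Z ^ (m + 1) = Z ^ (m + 1) * D + (m + 1) • Z ^ m := by
  induction m with
  | zero => simp [h]
  | succ m ih =>
    calc D * Z ^ (m + 2) = D * Z ^ (m + 1) * Z := by rw [pow_succ Z (m + 1), mul_assoc]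
      _ = Z ^ (m + 1) * (D * Z) + (m + 1) • Z ^ (m + 1) := by
        rw [ih, add_mul, mul_assoc, smul_mul_assoc, ← pow_succ]
      _ = Z ^ (m + 2) * D + (m + 1 + 1) • Z ^ (m + 1) := by
        rw [h, mul_add, mul_one, ← mul_assoc, ← pow_succ, add_assoc, succ_nsmul' _ (m + 1)]

variable (K : Type*) {A : Type*} [CommRing K] [Ring A] [Algebra K A]

/-- Integration by repeated parts, up to order `m`, for a pair with `D Z = Z D + 1`:
`∫ f = z f - z² / 2! ∂f + z³ / 3! ∂²f - ⋯`. It requires `m!` to be invertible in `K`, the values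
of `Ring.inverse` being junk otherwise. -/
noncomputable def formalIntegral (D Z : A) (m : ℕ) : A :=
  ∑ k ∈ Finset.range m, ((-1) ^ k * Ring.inverse ((k + 1)! : K)) • (Z ^ (k + 1) * D ^ k)

variable {K}

theorem mul_formalIntegral {D Z : A} (h : D * Z = Z * D + 1) {m : ℕ} (hm : IsUnit (m ! : K)) :
    D * formalIntegral K D Z m =
      1 - ((-1) ^ m * Ring.inverse (m ! : K)) • (Z ^ m * D ^ m) := by
  let t : ℕ → A := fun k => ((-1) ^ k * Ring.inverse (k ! : K)) • (Z ^ k * D ^ k)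
  have htelescope : ∀ k ∈ Finset.range m,
      D * ((-1) ^ k * Ring.inverse ((k + 1)! : K)) • (Z ^ (k + 1) * D ^ k) = t k - t (k + 1) := by
    intro k hk
    have hunit : IsUnit ((k + 1 : ℕ) : K) := by
      have := hm.natCast_factorial_of_le (Finset.mem_range.1 hk)
      rw [Nat.factorial_succ, Nat.cast_mul] at this
      exact isUnit_of_mul_isUnit_left this
    have hcoeff : Ring.inverse ((k + 1)! : K) * ((k + 1 : ℕ) : K) = Ring.inverse (k ! : K) := by
      rw [Nat.factorial_succ, Nat.cast_mul, Ring.mul_inverse_rev, mul_assoc,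
        Ring.inverse_mul_cancel _ hunit, mul_one]
    simp only [t]
    rw [mul_smul_comm, ← mul_assoc, mul_pow_succ_of_mul_eq_add_one h, add_mul, mul_assoc,
      ← pow_succ', smul_mul_assoc, ← Nat.cast_smul_eq_nsmul K, smul_add, smul_smul, mul_assoc,
      hcoeff, pow_succ (-1 : K) k]
    simp only [mul_neg_one, neg_mul, neg_smul]
    abel
  rw [formalIntegral, Finset.mul_sum, Finset.sum_congr rfl htelescope, Finset.sum_range_sub']
  simp [t]

theorem commute_formalIntegral {D Z X : A} (hD : Commute X D) (hZ : Commute X Z) (m : ℕ) :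
    Commute X (formalIntegral K D Z m) :=
  Commute.sum_right _ _ _ fun k _ =>
    ((hZ.pow_right (k + 1)).mul_right (hD.pow_right k)).smul_right _

end FormalIntegral

section Derivations

open scoped TensorProduct

variable {K R : Type*} [CommRing K] [CommRing R] [Algebra K R]

theorem derivation_mul_mulLeft (D : Derivation K R R) (z : R) :
    (D : Module.End K R) * LinearMap.mulLeft K z =
      LinearMap.mulLeft K z * (D : Module.End K R) + LinearMap.mulLeft K (D z) := by
  ext f
  simp [mul_comm]

/-- The Leibniz rule says that multiplication `R ⊗ R → R` intertwines `D ⊗ 1 + 1 ⊗ D` with `D`,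
and the `p`-th power of that sum of commuting operators is `D ^ p ⊗ 1 + 1 ⊗ D ^ p`. -/
theorem derivation_pow_char_leibniz (D : Derivation K R R) (p : ℕ) [Fact p.Prime] [CharP K p]
    (a b : R) :
    ((D : Module.End K R) ^ p) (a * b) =
      a • ((D : Module.End K R) ^ p) b + b • ((D : Module.End K R) ^ p) a := by
  let L : Module.End K (R ⊗[K] R) := (D : Module.End K R).rTensor R
  let L' : Module.End K (R ⊗[K] R) := (D : Module.End K R).lTensor R
  have hleibniz : (D : Module.End K R) ∘ₗ LinearMap.mul' K R = LinearMap.mul' K R ∘ₗ (L + L') := by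
    ext x y
    simp [L, L', mul_comm, add_comm]
  have hcomm : Commute L L' :=
    (LinearMap.rTensor_comp_lTensor ..).trans (LinearMap.lTensor_comp_rTensor ..).symm
  have hp : (p : Module.End K (R ⊗[K] R)) = 0 := by
    rw [← map_natCast (algebraMap K _), CharP.cast_eq_zero, map_zero]
  obtain ⟨s, hs⟩ := hcomm.exists_add_pow_prime_eq (Fact.out : p.Prime)
  have hpow := Module.End.commute_pow_left_of_commute hleibniz p
  rw [hs, hp, zero_mul, zero_mul, zero_mul, add_zero, LinearMap.rTensor_pow,
    LinearMap.lTensor_pow] at hpow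
  simpa [mul_comm, add_comm] using LinearMap.congr_fun hpow (a ⊗ₜ b)

/-- The `p`-operation of the restricted Lie algebra of derivations in characteristic `p`. -/
def derivationPowChar (D : Derivation K R R) (p : ℕ) [Fact p.Prime] [CharP K p] :
    Derivation K R R :=
  Derivation.mk' ((D : Module.End K R) ^ p) (derivation_pow_char_leibniz D p)

/-- The derivation given by a function that is additive, satisfies the Leibniz rule and kills the
constants. -/
def derivationOfLeibniz (D : R → R) (hadd : ∀ a b, D (a + b) = D a + D b)
    (hmul : ∀ a b, D (a * b) = a * D b + b * D a) (hK : ∀ c : K, D (algebraMap K R c) = 0) :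
    Derivation K R R :=
  Derivation.mk'
    { toFun := D
      map_add' := hadd
      map_smul' := fun c a => by
        rw [Algebra.smul_def, Algebra.smul_def, hmul, hK, mul_zero, add_zero, RingHom.id_apply] }
    hmul

end Derivations

section Coordinates

variable {ι K R : Type*} [CommRing K] [CommRing R] [Algebra K R]

/-- Coordinates `z` on a `K`-algebra together with the partial derivatives `D i = ∂/∂z_i`. By
duality with the `D i`, the differentials `dz_i` are then a basis of `Ω[R⁄K]`, not only a spanning
family. -/
structure IsCoordinateSystem (z : ι → R) (D : ι → Derivation K R R) : Prop where
  apply_self : ∀ i, D i (z i) = 1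
  apply_of_ne : ∀ {i j}, j ≠ i → D j (z i) = 0
  span_eq_top : Submodule.span R (Set.range fun i => KaehlerDifferential.D K R (z i)) = ⊤

namespace IsCoordinateSystem

variable {z : ι → R} {D : ι → Derivation K R R}

theorem derivation_eq_zero (h : IsCoordinateSystem z D) {E : Derivation K R R}
    (hE : ∀ i, E (z i) = 0) : E = 0 := by
  have hlift : E.liftKaehlerDifferential = 0 :=
    LinearMap.ext_on_range h.span_eq_top fun i => by simp [hE]
  rw [← E.liftKaehlerDifferential_comp, hlift]
  rfl

theorem apply_apply_eq_zero (h : IsCoordinateSystem z D) (i j k : ι) : D i (D j (z k)) = 0 := by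
  rcases eq_or_ne j k with rfl | hjk
  · rw [h.apply_self, Derivation.map_one_eq_zero]
  · rw [h.apply_of_ne hjk, map_zero]

theorem commute (h : IsCoordinateSystem z D) (i j : ι) :
    Commute (D i : Module.End K R) (D j : Module.End K R) := by
  have hbracket : ⁅D i, D j⁆ = 0 := h.derivation_eq_zero fun k => by
    rw [Derivation.commutator_apply, h.apply_apply_eq_zero, h.apply_apply_eq_zero, sub_zero]
  rw [commute_iff_lie_eq, ← Derivation.commutator_coe_linear_map, hbracket,
    Derivation.coe_zero_linearMap]

theorem pow_char_eq_zero (h : IsCoordinateSystem z D) (p : ℕ) [Fact p.Prime] [CharP K p] (i : ι) :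
    (D i : Module.End K R) ^ p = 0 := by
  have hpow : derivationPowChar (D i) p = 0 := h.derivation_eq_zero fun k => by
    obtain ⟨m, rfl⟩ := Nat.exists_eq_add_of_le' (Fact.out : p.Prime).two_le
    change ((D i : Module.End K R) ^ (m + 2)) (z k) = 0
    rw [pow_add, Module.End.mul_apply, pow_two, Module.End.mul_apply]
    exact (congrArg _ (h.apply_apply_eq_zero i i k)).trans (map_zero _)
  exact congrArg (fun E : Derivation K R R => (E : Module.End K R)) hpow

theorem commute_mulLeft (h : IsCoordinateSystem z D) {i j : ι} (hji : j ≠ i) :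
    Commute (D j : Module.End K R) (LinearMap.mulLeft K (z i)) := by
  rw [commute_iff_eq, derivation_mul_mulLeft, h.apply_of_ne hji, LinearMap.mulLeft_zero_eq_zero,
    add_zero]

theorem mul_mulLeft_self (h : IsCoordinateSystem z D) (i : ι) :
    (D i : Module.End K R) * LinearMap.mulLeft K (z i) =
      LinearMap.mulLeft K (z i) * (D i : Module.End K R) + 1 := by
  rw [derivation_mul_mulLeft, h.apply_self, LinearMap.mulLeft_one]
  rfl

theorem of_isLocalization (h : IsCoordinateSystem z D) (S : Submonoid R) {L : Type*} [CommRing L]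
    [Algebra K L] [Algebra R L] [IsScalarTower K R L] [IsLocalization S L]
    {E : ι → Derivation K L L}
    (hE : ∀ i f, E i (algebraMap R L f) = algebraMap R L (D i f)) :
    IsCoordinateSystem (fun i => algebraMap R L (z i)) E where
  apply_self i := by rw [hE, h.apply_self, map_one]
  apply_of_ne hji := by rw [hE, h.apply_of_ne hji, map_zero]
  span_eq_top := by
    have hspan := span_eq_top_of_isLocalizedModule L S (KaehlerDifferential.map K K R L)
      h.span_eq_top
    rw [← Set.range_comp] at hspan
    simpa only [Function.comp_def, KaehlerDifferential.map_D] using hspan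

end IsCoordinateSystem

theorem isCoordinateSystem_pderiv (ι K : Type*) [CommRing K] :
    IsCoordinateSystem (X : ι → MvPolynomial ι K) (fun i => pderiv i) where
  apply_self := pderiv_X_self
  apply_of_ne hji := pderiv_X_of_ne hji.symm
  span_eq_top := by
    convert! (KaehlerDifferential.mvPolynomialBasis K ι).span_eq
    exact (KaehlerDifferential.mvPolynomialBasis_apply ..).symm

end Coordinates

theorem positive_characteristic_poincare_lemma_general {K : Type*} {R : Type} [CommRing K]
    [CommRing R] [Algebra K R] {p n r : ℕ} [Fact p.Prime] [CharP K p] {z : Fin n → R}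
    {D : Fin n → Derivation K R R} (h : IsCoordinateSystem z D) (ω : GForm R n (r + 1)) :
    (∃ η : GForm R n r, gextd (fun i => D i) η = ω) ↔
      (gextd (fun i => D i) ω = 0 ∧
        ∀ T : {s : Finset (Fin n) // s.card = r + 1},
          gpdSet (fun i => D i) p T.1 (ω T) = 0) := by
  have hp : p.Prime := Fact.out
  have hunit : IsUnit ((p - 1).factorial : K) :=
    (IsUnit.natCast_factorial_iff_of_charP p).2 (Nat.sub_one_lt hp.ne_zero)
  let Z : Fin n → Module.End K R := fun i => LinearMap.mulLeft K (z i)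
  refine exists_gextd_eq_iff_of_commute (D := fun i => (D i : Module.End K R))
    (J := fun i => formalIntegral K (D i : Module.End K R) (Z i) (p - 1))
    (Y := fun i => ((-1) ^ (p - 1) * Ring.inverse ((p - 1).factorial : K)) • Z i ^ (p - 1))
    hp.ne_zero h.commute (h.pow_char_eq_zero p) (fun i => ?_) (fun i j hji => ?_)
    (fun i j hji => ?_) ω
  · rw [mul_formalIntegral (h.mul_mulLeft_self i) hunit, smul_mul_assoc]
  · exact commute_formalIntegral (h.commute j i) (h.commute_mulLeft hji) _
  · exact ((h.commute_mulLeft hji).pow_right _).smul_right _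

/-- **Positive characteristic Poincaré Lemma.** Let `K` be a field of
characteristic `p > 0` and let `R` be `K[z_1,…,z_n]` or `K(z_1,…,z_n)`. An `r`-form
(`r = r₀+1 ≥ 1`) over `R` is exact iff it is `p`-closed, i.e. `dω = 0` and
`∂_{i_1}^{p-1} ⋯ ∂_{i_r}^{p-1}(a_I) = 0` for every multi-index `I = (i_1 < … < i_r)`.
For the rational function field, the partial derivatives are formalized as any family of
derivations on the fraction field extending the formal `∂_j` of `K[z]`. -/
theorem positive_characteristic_poincare_lemma
    (K : Type) [Field K] (p n r : ℕ) [CharP K p] (hp : 0 < p) :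
    (∀ ω : GForm (MvPolynomial (Fin n) K) n (r + 1),
      (∃ η : GForm (MvPolynomial (Fin n) K) n r, gextd (pderivFam K n) η = ω) ↔
        (gextd (pderivFam K n) ω = 0 ∧
          ∀ T : {s : Finset (Fin n) // s.card = r + 1},
            gpdSet (pderivFam K n) p T.1 (ω T) = 0)) ∧
    (∀ D : Fin n → FractionRing (MvPolynomial (Fin n) K) →
        FractionRing (MvPolynomial (Fin n) K),
      (∀ j a b, D j (a + b) = D j a + D j b) →
      (∀ j a b, D j (a * b) = a * D j b + b * D j a) →
      (∀ (j : Fin n) (g : MvPolynomial (Fin n) K),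
        D j (algebraMap (MvPolynomial (Fin n) K) (FractionRing (MvPolynomial (Fin n) K)) g) =
          algebraMap (MvPolynomial (Fin n) K) (FractionRing (MvPolynomial (Fin n) K))
            (pderiv j g)) →
      ∀ ω : GForm (FractionRing (MvPolynomial (Fin n) K)) n (r + 1),
        (∃ η : GForm (FractionRing (MvPolynomial (Fin n) K)) n r, gextd D η = ω) ↔
          (gextd D ω = 0 ∧
            ∀ T : {s : Finset (Fin n) // s.card = r + 1},
              gpdSet D p T.1 (ω T) = 0)) := by
  have : Fact p.Prime := ⟨CharP.char_prime_of_ne_zero K hp.ne'⟩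
  have hpoly := isCoordinateSystem_pderiv (Fin n) K
  refine ⟨positive_characteristic_poincare_lemma_general hpoly, fun D hadd hmul halg => ?_⟩
  have hconst (j : Fin n) (c : K) : D j (algebraMap K _ c) = 0 := by
    rw [IsScalarTower.algebraMap_apply K (MvPolynomial (Fin n) K), MvPolynomial.algebraMap_eq,
      halg, pderiv_C, map_zero]
  exact positive_characteristic_poincare_lemma_general
    (D := fun j => derivationOfLeibniz (D j) (hadd j) (hmul j) (hconst j))
    (hpoly.of_isLocalization (nonZeroDivisors _) halg)
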